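/- For all treewidth patterns p, q, r with L_p = L_q = L_r: (p ⋈ q) ◁ r if and only if p ◁ (q ⋈ r), where by convention no treewidth pattern is compatible with ⊥ (so either side is false when the corresponding join equals ⊥). -/

import Mathlib

/-- A (candidate) treewidth pattern: a finite collection of blocks of labels in
`{0,…,k}`. -/
abbrev TWP (k : ℕ) := Finset (Finset (Fin (k + 1)))

/-- A treewidth pattern: a partition of a subset `L_p ⊆ {0,…,k}` containing `0`. -/
def IsTWPat {k : ℕ} (p : TWP k) : Prop :=
  (∀ S ∈ p, S.Nonempty) ∧ (∀ S ∈ p, ∀ T ∈ p, S ≠ T → Disjoint S T) ∧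
    ∃ S ∈ p, (0 : Fin (k + 1)) ∈ S

/-- The label set `L_p` of a pattern. -/
def labels {k : ℕ} (p : TWP k) : Finset (Fin (k + 1)) := p.sup id

/-- The glueing of the canonical forests of two treewidth patterns `p` and `q`: the
(identified) boundary vertices are represented by their labels, and each block gets a
star center adjacent to the labels it contains.  (Labels outside `L_p` are isolated and
affect neither acyclicity nor components meeting the boundary.) -/
def glueTP {k : ℕ} (p q : TWP k) :
    SimpleGraph (Fin (k + 1) ⊕ ({S // S ∈ p} ⊕ {S // S ∈ q})) :=
  SimpleGraph.fromRel fun x y =>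
    match x, y with
    | Sum.inl ℓ, Sum.inr (Sum.inl S) => ℓ ∈ S.1
    | Sum.inl ℓ, Sum.inr (Sum.inr S) => ℓ ∈ S.1
    | _, _ => False

/-- Compatibility `p ◁ q` of treewidth patterns: the label sets agree and the glueing of
the canonical forests is acyclic. -/
def Compat {k : ℕ} (p q : TWP k) : Prop :=
  labels p = labels q ∧ (glueTP p q).IsAcyclic

open scoped Classical in
/-- The join `p ⋈ q` of two treewidth patterns: `⊥` (i.e. `none`) if the label sets differ
or the glueing of the canonical forests contains a cycle; otherwise the pattern whose
blocks are the label sets of the connected components of the glued forest. -/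
noncomputable def joinTP {k : ℕ} (p q : TWP k) : Option (TWP k) :=
  if labels p = labels q ∧ (glueTP p q).IsAcyclic then
    some ((labels p).image fun ℓ =>
      (labels p).filter fun ℓ' => (glueTP p q).Reachable (Sum.inl ℓ) (Sum.inl ℓ'))
  else none

open scoped Classical in
/-- A family `R` of treewidth patterns represents a family `S` if for every treewidth
pattern `r`, the numbers of patterns of `R` and of `S` compatible with `r` agree
modulo 2. -/
def Represents {k : ℕ} (R S : Finset (TWP k)) : Prop :=
  ∀ r : TWP k, IsTWPat r →
    (R.filter fun pp => Compat pp r).card % 2 = (S.filter fun pp => Compat pp r).card % 2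

/-!
For a family of blocks on `n` points, let `c` be the number of classes left after merging the points
of each block, and let `e` be the sum of `|S| - 1` over the nonempty blocks `S`. Merging one block
`S` loses at most `|S| - 1` classes, so `n ≤ c + e`; counting vertices, edges and components shows
that equality holds iff the incidence graph is a forest. The join `p ⋈ q` consists of disjoint
blocks and merges the same points as `p` and `q` together, so `e (p ⋈ q) = n - c (p, q)`. Hence
`p ◁ q` and `(p ⋈ q) ◁ r` hold together iff `n = c (p, q, r) + e p + e q + e r`, a condition
symmetric in `p`, `q`, `r`.
-/

section ForestCounting

variable {V : Type*} {G : SimpleGraph V}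

lemma reachable_deleteEdges_singleton_or {u v a b : V} (h : G.Reachable a b) :
    (G.deleteEdges {s(u, v)}).Reachable a b ∨
      ((G.deleteEdges {s(u, v)}).Reachable a u ∨ (G.deleteEdges {s(u, v)}).Reachable a v) ∧
      ((G.deleteEdges {s(u, v)}).Reachable b u ∨ (G.deleteEdges {s(u, v)}).Reachable b v) := by
  obtain ⟨walk⟩ := h
  induction walk with
  | nil => exact .inl .rfl
  | @cons a c b hac _ ih =>
    by_cases hedge : s(a, c) = s(u, v)
    · rcases Sym2.eq_iff.1 hedge with ⟨rfl, rfl⟩ | ⟨rfl, rfl⟩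
      · exact .inr ⟨.inl .rfl, ih.elim (fun h ↦ .inr h.symm) And.right⟩
      · exact .inr ⟨.inr .rfl, ih.elim (fun h ↦ .inl h.symm) And.right⟩
    · have hac' : (G.deleteEdges {s(u, v)}).Reachable a c :=
        (SimpleGraph.deleteEdges_adj.2 ⟨hac, hedge⟩).reachable
      exact ih.imp hac'.trans (And.imp_left (Or.imp hac'.trans hac'.trans))

variable [Finite V]

lemma card_connectedComponent_deleteEdges_of_isBridge {u v : V} (hadj : G.Adj u v)
    (hbridge : G.IsBridge s(u, v)) :
    Nat.card (G.deleteEdges {s(u, v)}).ConnectedComponent =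
      Nat.card G.ConnectedComponent + 1 := by
  set H := G.deleteEdges {s(u, v)}
  have hle : H ≤ G := G.deleteEdges_le _
  -- Deleting the bridge only splits off the component of `u`.
  let merge (c : {c : H.ConnectedComponent // c ≠ H.connectedComponentMk u}) :
      G.ConnectedComponent := c.1.map (SimpleGraph.Hom.ofLE hle)
  have merge_bijective : Function.Bijective merge := by
    constructor
    · rintro ⟨⟨a⟩, ha⟩ ⟨⟨b⟩, hb⟩ hab
      have hau : ¬ H.Reachable a u := fun h ↦ ha (SimpleGraph.ConnectedComponent.sound h)
      have hbu : ¬ H.Reachable b u := fun h ↦ hb (SimpleGraph.ConnectedComponent.sound h)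
      refine Subtype.ext (SimpleGraph.ConnectedComponent.sound ?_)
      rcases reachable_deleteEdges_singleton_or (SimpleGraph.ConnectedComponent.exact hab) with
        h | ⟨hav, hbv⟩
      · exact h
      · exact (hav.resolve_left hau).trans (hbv.resolve_left hbu).symm
    · rintro ⟨a⟩
      by_cases hau : H.Reachable a u
      · refine ⟨⟨H.connectedComponentMk v, fun h ↦ hbridge ?_⟩,
          SimpleGraph.ConnectedComponent.sound (hadj.symm.reachable.trans (hau.symm.mono hle))⟩
        exact (SimpleGraph.ConnectedComponent.exact h).symm
      · refine ⟨⟨H.connectedComponentMk a, fun h ↦ hau ?_⟩, rfl⟩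
        exact SimpleGraph.ConnectedComponent.exact h
  classical
  rw [← Nat.card_congr (Equiv.ofBijective merge merge_bijective), ← Finite.card_option,
    Nat.card_congr (Equiv.optionSubtypeNe (H.connectedComponentMk u))]

lemma card_eq_card_connectedComponent_add_ncard_edgeSet (hG : G.IsAcyclic) :
    Nat.card V = Nat.card G.ConnectedComponent + G.edgeSet.ncard := by
  induction G using WellFoundedLT.induction with
  | ind G ih =>
    by_cases hbot : G = ⊥
    · subst hbot
      rw [SimpleGraph.edgeSet_bot, Set.ncard_empty, add_zero]
      exact Nat.card_congr (Equiv.ofBijective (SimpleGraph.connectedComponentMk ⊥)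
        ⟨fun _ _ h ↦ SimpleGraph.reachable_bot.1 (SimpleGraph.ConnectedComponent.exact h),
          Quot.mk_surjective⟩)
    · obtain ⟨u, v, hadj⟩ := SimpleGraph.ne_bot_iff_exists_adj.1 hbot
      have hbridge := SimpleGraph.isAcyclic_iff_forall_adj_isBridge.1 hG hadj
      have hle : G.deleteEdges {s(u, v)} ≤ G := G.deleteEdges_le _
      have hlt : G.deleteEdges {s(u, v)} < G :=
        hle.lt_of_ne fun h ↦ hbridge (h.symm ▸ hadj.reachable)
      have hedges : (G.deleteEdges {s(u, v)}).edgeSet.ncard + 1 = G.edgeSet.ncard := by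
        rw [SimpleGraph.edgeSet_deleteEdges]
        exact Set.ncard_sdiff_singleton_add_one hadj
      have hcount := ih _ hlt (hG.anti hle)
      rw [card_connectedComponent_deleteEdges_of_isBridge hadj hbridge] at hcount
      lia

lemma card_lt_card_connectedComponent_add_ncard_edgeSet (hG : ¬ G.IsAcyclic) :
    Nat.card V < Nat.card G.ConnectedComponent + G.edgeSet.ncard := by
  obtain ⟨F, hle, hF, hreach⟩ := G.exists_isAcyclic_reachable_eq_le
  have hcomp : Nat.card F.ConnectedComponent = Nat.card G.ConnectedComponent := by
    unfold SimpleGraph.ConnectedComponent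
    rw [hreach]
  have hlt : F < G := hle.lt_of_ne fun h ↦ hG (h ▸ hF)
  rw [card_eq_card_connectedComponent_add_ncard_edgeSet hF, hcomp]
  exact Nat.add_lt_add_left (Set.ncard_lt_ncard (SimpleGraph.edgeSet_ssubset_edgeSet.2 hlt)) _

variable (G) in
lemma card_le_card_connectedComponent_add_ncard_edgeSet :
    Nat.card V ≤ Nat.card G.ConnectedComponent + G.edgeSet.ncard := by
  by_cases hG : G.IsAcyclic
  · exact (card_eq_card_connectedComponent_add_ncard_edgeSet hG).le
  · exact (card_lt_card_connectedComponent_add_ncard_edgeSet hG).le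

lemma isAcyclic_iff_card_eq :
    G.IsAcyclic ↔ Nat.card V = Nat.card G.ConnectedComponent + G.edgeSet.ncard :=
  ⟨card_eq_card_connectedComponent_add_ncard_edgeSet, fun h ↦ by_contra fun hG ↦
    (card_lt_card_connectedComponent_add_ncard_edgeSet hG).ne h⟩

end ForestCounting

section IncidenceGraph

variable {α ι κ : Type*}

/-- The bipartite incidence graph of a family `B` of blocks. For two patterns side by side it is the
glueing of their canonical forests. -/
def incidenceGraph (B : ι → Finset α) : SimpleGraph (α ⊕ ι) where
  Adj
    | .inl a, .inr i => a ∈ B i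
    | .inr i, .inl a => a ∈ B i
    | _, _ => False
  symm := ⟨by rintro (a | i) (b | j) h <;> exact h⟩
  loopless := ⟨by rintro (a | i) h <;> exact h⟩

/-- The finest equivalence relation in which each block of `B` lies in a single class. It encodes
the components of `incidenceGraph B`, and joins of patterns become suprema of these relations. -/
def blockSetoid (B : ι → Finset α) : Setoid α :=
  Relation.EqvGen.setoid fun a b ↦ ∃ i, a ∈ B i ∧ b ∈ B i

/-- The sum of `|B i| - 1` over the blocks, which bounds the number of classes that are lost when
the points of each block are merged. The subtraction is truncated: empty blocks contribute `0`. -/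
def excess [Fintype ι] (B : ι → Finset α) : ℕ :=
  ∑ i, ((B i).card - 1)

lemma blockSetoid_le_iff {B : ι → Finset α} {s : Setoid α} :
    blockSetoid B ≤ s ↔ ∀ i, ∀ a ∈ B i, ∀ b ∈ B i, s a b := by
  refine ⟨fun h i a ha b hb ↦ h (.rel _ _ ⟨i, ha, hb⟩), fun h ↦ Setoid.eqvGen_le ?_⟩
  rintro a b ⟨i, ha, hb⟩
  exact h i a ha b hb

lemma blockSetoid_of_mem {B : ι → Finset α} {i : ι} {a b : α} (ha : a ∈ B i) (hb : b ∈ B i) :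
    blockSetoid B a b :=
  blockSetoid_le_iff.1 le_rfl i a ha b hb

lemma blockSetoid_sumElim (B : ι → Finset α) (C : κ → Finset α) :
    blockSetoid (Sum.elim B C) = blockSetoid B ⊔ blockSetoid C :=
  eq_of_forall_ge_iff fun s ↦ by
    simp only [sup_le_iff, blockSetoid_le_iff, Sum.forall, Sum.elim_inl, Sum.elim_inr]

lemma excess_sumElim [Fintype ι] [Fintype κ] (B : ι → Finset α) (C : κ → Finset α) :
    excess (Sum.elim B C) = excess B + excess C :=
  Fintype.sum_sum_type _

variable {B : ι → Finset α}

lemma reachable_inl_inl_iff_blockSetoid {a b : α} :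
    (incidenceGraph B).Reachable (.inl a) (.inl b) ↔ blockSetoid B a b := by
  constructor
  · have blockSetoid_of_reachable {x : α ⊕ ι} (h : (incidenceGraph B).Reachable (.inl a) x) :
        x.elim (blockSetoid B a) fun i ↦ ∀ b ∈ B i, blockSetoid B a b := by
      rw [SimpleGraph.reachable_iff_reflTransGen] at h
      induction h with
      | refl => exact Setoid.refl' _ a
      | @tail x y _ hxy ih =>
        match x, y, hxy with
        | .inl _, .inr _, hmem => exact fun b hb ↦ Setoid.trans' _ ih (blockSetoid_of_mem hmem hb)
        | .inr _, .inl b, hmem => exact ih b hmem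
    exact blockSetoid_of_reachable
  · have hle : blockSetoid B ≤ (incidenceGraph B).reachableSetoid.comap .inl := by
      refine blockSetoid_le_iff.2 fun i a ha b hb ↦ ?_
      have hai : (incidenceGraph B).Adj (.inl a) (.inr i) := ha
      have hib : (incidenceGraph B).Adj (.inr i) (.inl b) := hb
      exact hai.reachable.trans hib.reachable
    exact @hle a b

lemma not_reachable_inr_of_eq_empty {i : ι} (hi : B i = ∅) {x : α ⊕ ι} (hx : x ≠ .inr i) :
    ¬ (incidenceGraph B).Reachable x (.inr i) := by
  intro h
  obtain ⟨a | j, hadj⟩ := h.nonempty_neighborSet_right hx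
  · have ha : a ∈ B i := hadj
    simp [hi] at ha
  · exact hadj

lemma isAcyclic_incidenceGraph_of_pairwise_disjoint (hB : Pairwise (Function.onFun Disjoint B)) :
    (incidenceGraph B).IsAcyclic := by
  have isBridge_of_mem {a : α} {i : ι} (hai : a ∈ B i) :
      (incidenceGraph B).IsBridge s(.inl a, .inr i) := by
    intro h
    obtain ⟨b | j, hadj⟩ := h.nonempty_neighborSet_left Sum.inl_ne_inr
    · exact hadj.1
    · obtain ⟨haj, hedge⟩ := SimpleGraph.deleteEdges_adj.1 hadj
      have hji : j = i := hB.eq (Finset.not_disjoint_iff.2 ⟨a, haj, hai⟩)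
      exact hedge (hji ▸ rfl)
  rw [SimpleGraph.isAcyclic_iff_forall_adj_isBridge]
  rintro (a | i) (b | j) hadj
  · exact hadj.elim
  · exact isBridge_of_mem hadj
  · rw [Sym2.eq_swap]
    exact isBridge_of_mem hadj
  · exact hadj.elim

lemma ncard_edgeSet_incidenceGraph [Fintype ι] :
    (incidenceGraph B).edgeSet.ncard = ∑ i, (B i).card := by
  let edge (x : (i : ι) × B i) : Sym2 (α ⊕ ι) := s(.inl x.2, .inr x.1)
  have edge_injective : Function.Injective edge := by
    rintro ⟨i, a⟩ ⟨j, b⟩ h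
    obtain ⟨hab, rfl⟩ : (a : α) = b ∧ i = j := by simpa [edge] using h
    rw [Subtype.ext hab]
  have range_edge : Set.range edge = (incidenceGraph B).edgeSet := by
    ext e
    induction e with | _ x y =>
    constructor
    · rintro ⟨⟨i, a⟩, h⟩
      rw [← h]
      exact a.2
    · intro hadj
      match x, y, hadj with
      | .inl a, .inr i, ha => exact ⟨⟨i, a, ha⟩, rfl⟩
      | .inr i, .inl a, ha => exact ⟨⟨i, a, ha⟩, Sym2.eq_swap⟩
  rw [← range_edge, Set.ncard_range_of_injective edge_injective]
  simp

lemma card_connectedComponent_incidenceGraph [Finite α] [Finite ι] :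
    Nat.card (incidenceGraph B).ConnectedComponent =
      Nat.card (Quotient (blockSetoid B)) + Nat.card {i // B i = ∅} := by
  let component : Quotient (blockSetoid B) ⊕ {i // B i = ∅} →
      (incidenceGraph B).ConnectedComponent :=
    Sum.elim
      (Quotient.lift (fun a ↦ (incidenceGraph B).connectedComponentMk (.inl a)) fun _ _ h ↦
        SimpleGraph.ConnectedComponent.sound (reachable_inl_inl_iff_blockSetoid.2 h))
      fun i ↦ (incidenceGraph B).connectedComponentMk (.inr i.1)
  have component_bijective : Function.Bijective component := by
    constructor
    · rintro (⟨⟨a⟩⟩ | ⟨i, hi⟩) (⟨⟨b⟩⟩ | ⟨j, hj⟩) h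
      · exact congrArg Sum.inl (Quotient.sound
          (reachable_inl_inl_iff_blockSetoid.1 (SimpleGraph.ConnectedComponent.exact h)))
      · exact absurd (SimpleGraph.ConnectedComponent.exact h)
          (not_reachable_inr_of_eq_empty hj Sum.inl_ne_inr)
      · exact absurd (SimpleGraph.ConnectedComponent.exact h.symm)
          (not_reachable_inr_of_eq_empty hi Sum.inl_ne_inr)
      · by_contra hij
        exact not_reachable_inr_of_eq_empty hj (by simpa using hij)
          (SimpleGraph.ConnectedComponent.exact h)
    · rintro ⟨a | i⟩
      · exact ⟨.inl ⟦a⟧, rfl⟩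
      · rcases (B i).eq_empty_or_nonempty with hi | ⟨a, ha⟩
        · exact ⟨.inr ⟨i, hi⟩, rfl⟩
        · have hadj : (incidenceGraph B).Adj (.inl a) (.inr i) := ha
          exact ⟨.inl ⟦a⟧, SimpleGraph.ConnectedComponent.sound hadj.reachable⟩
  rw [← Nat.card_congr (Equiv.ofBijective component component_bijective), Nat.card_sum]

variable [Fintype ι]

lemma sum_card_add_card_eq_empty :
    ∑ i, (B i).card + Nat.card {i // B i = ∅} = excess B + Nat.card ι := by
  classical
  have hblock (i : ι) : (B i).card + (if B i = ∅ then 1 else 0) = (B i).card - 1 + 1 := by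
    split_ifs with hi
    · simp [hi]
    · have := (Finset.nonempty_iff_ne_empty.2 hi).card_pos
      lia
  rw [Nat.card_eq_fintype_card, Fintype.card_subtype, Finset.card_filter, ← Finset.sum_add_distrib,
    Finset.sum_congr rfl fun i _ ↦ hblock i, Finset.sum_add_distrib, excess]
  simp

variable [Finite α]

lemma card_connectedComponent_add_ncard_edgeSet_incidenceGraph :
    Nat.card (incidenceGraph B).ConnectedComponent + (incidenceGraph B).edgeSet.ncard =
      Nat.card (Quotient (blockSetoid B)) + excess B + Nat.card ι := by
  rw [card_connectedComponent_incidenceGraph, ncard_edgeSet_incidenceGraph, add_assoc,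
    add_comm (Nat.card _) (∑ i, _), sum_card_add_card_eq_empty, add_assoc]

lemma isAcyclic_incidenceGraph_iff :
    (incidenceGraph B).IsAcyclic ↔
      Nat.card α = Nat.card (Quotient (blockSetoid B)) + excess B := by
  rw [isAcyclic_iff_card_eq, Nat.card_sum,
    card_connectedComponent_add_ncard_edgeSet_incidenceGraph, Nat.add_right_cancel_iff]

variable (B) in
lemma card_le_card_quotient_blockSetoid_add_excess :
    Nat.card α ≤ Nat.card (Quotient (blockSetoid B)) + excess B := by
  have h := card_le_card_connectedComponent_add_ncard_edgeSet (incidenceGraph B)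
  rwa [Nat.card_sum, card_connectedComponent_add_ncard_edgeSet_incidenceGraph,
    Nat.add_le_add_iff_right] at h

end IncidenceGraph

section ClassesOn

variable {α ι : Type*}

open scoped Classical in
/-- The partition of `L` into the nonempty traces of the classes of `s`. -/
noncomputable def classesOn (s : Setoid α) (L : Finset α) : Finset (Finset α) :=
  L.image fun a ↦ L.filter (s a)

variable {s : Setoid α} {L : Finset α}

lemma classesOn_pairwise_disjoint :
    Pairwise (Function.onFun Disjoint (Subtype.val : classesOn s L → Finset α)) := by
  classical
  rintro ⟨S, hS⟩ ⟨T, hT⟩ hne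
  obtain ⟨a, -, rfl⟩ := Finset.mem_image.1 hS
  obtain ⟨b, -, rfl⟩ := Finset.mem_image.1 hT
  refine Finset.disjoint_left.2 fun c hac hbc ↦ hne (Subtype.ext (Finset.filter_congr fun d _ ↦ ?_))
  have hab : s a b := s.trans' (Finset.mem_filter.1 hac).2 (s.symm' (Finset.mem_filter.1 hbc).2)
  exact ⟨s.trans' (s.symm' hab), s.trans' hab⟩

lemma sup_id_classesOn [DecidableEq α] : (classesOn s L).sup id = L := by
  ext a
  simp only [classesOn, Finset.mem_sup, Finset.mem_image, id]
  grind [s.refl' a]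

lemma blockSetoid_classesOn_le : blockSetoid (Subtype.val : classesOn s L → Finset α) ≤ s := by
  classical
  refine blockSetoid_le_iff.2 fun ⟨S, hS⟩ a ha b hb ↦ ?_
  obtain ⟨c, -, rfl⟩ := Finset.mem_image.1 hS
  exact s.trans' (s.symm' (Finset.mem_filter.1 ha).2) (Finset.mem_filter.1 hb).2

lemma blockSetoid_le_blockSetoid_classesOn {B : ι → Finset α} (hs : blockSetoid B ≤ s)
    (hL : ∀ i, B i ⊆ L) :
    blockSetoid B ≤ blockSetoid (Subtype.val : classesOn s L → Finset α) := by
  classical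
  refine blockSetoid_le_iff.2 fun i a ha b hb ↦ ?_
  refine blockSetoid_of_mem (i := ⟨L.filter (s a), Finset.mem_image_of_mem _ (hL i ha)⟩) ?_ ?_
  · exact Finset.mem_filter.2 ⟨hL i ha, s.refl' a⟩
  · exact Finset.mem_filter.2 ⟨hL i hb, hs (blockSetoid_of_mem ha hb)⟩

end ClassesOn

namespace TWP

variable {k : ℕ}

/-- The blocks of `p` as a family indexed by `p` itself, the form that `incidenceGraph` takes. -/
abbrev blocks (p : TWP k) : {S // S ∈ p} → Finset (Fin (k + 1)) := Subtype.val

/-- The pattern that `p ⋈ q` equals unless it is `⊥`. -/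
noncomputable def joinPattern (p q : TWP k) : TWP k :=
  classesOn (blockSetoid p.blocks ⊔ blockSetoid q.blocks) (labels p)

lemma glueTP_eq_incidenceGraph (p q : TWP k) :
    glueTP p q = incidenceGraph (Sum.elim p.blocks q.blocks) := by
  ext (a | S | S) (b | T | T) <;> simp [glueTP, incidenceGraph]

lemma reachable_glueTP_inl_inl_iff {p q : TWP k} {a b : Fin (k + 1)} :
    (glueTP p q).Reachable (.inl a) (.inl b) ↔
      (blockSetoid p.blocks ⊔ blockSetoid q.blocks) a b := by
  rw [glueTP_eq_incidenceGraph, reachable_inl_inl_iff_blockSetoid, blockSetoid_sumElim]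

lemma isAcyclic_glueTP_iff (p q : TWP k) :
    (glueTP p q).IsAcyclic ↔
      k + 1 = Nat.card (Quotient (blockSetoid p.blocks ⊔ blockSetoid q.blocks)) +
        (excess p.blocks + excess q.blocks) := by
  rw [glueTP_eq_incidenceGraph, isAcyclic_incidenceGraph_iff, Nat.card_fin, blockSetoid_sumElim,
    excess_sumElim]

lemma le_card_quotient_add_excess_add_excess (p q : TWP k) :
    k + 1 ≤ Nat.card (Quotient (blockSetoid p.blocks ⊔ blockSetoid q.blocks)) +
      (excess p.blocks + excess q.blocks) := by
  have h := card_le_card_quotient_blockSetoid_add_excess (Sum.elim p.blocks q.blocks)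
  rwa [Nat.card_fin, blockSetoid_sumElim, excess_sumElim] at h

lemma compat_comm {p q : TWP k} : Compat p q ↔ Compat q p := by
  rw [Compat, Compat, isAcyclic_glueTP_iff, isAcyclic_glueTP_iff, eq_comm (a := labels p),
    sup_comm, add_comm (excess p.blocks)]

lemma labels_joinPattern (p q : TWP k) : labels (joinPattern p q) = labels p :=
  sup_id_classesOn

lemma blocks_subset_labels (p : TWP k) (S : {S // S ∈ p}) : p.blocks S ⊆ labels p :=
  Finset.le_sup (f := id) S.2

lemma blockSetoid_joinPattern {p q : TWP k} (hpq : labels p = labels q) :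
    blockSetoid (joinPattern p q).blocks = blockSetoid p.blocks ⊔ blockSetoid q.blocks := by
  refine le_antisymm blockSetoid_classesOn_le (sup_le ?_ ?_)
  · exact blockSetoid_le_blockSetoid_classesOn le_sup_left p.blocks_subset_labels
  · exact blockSetoid_le_blockSetoid_classesOn le_sup_right (hpq ▸ q.blocks_subset_labels)

lemma card_quotient_add_excess_joinPattern {p q : TWP k} (hpq : labels p = labels q) :
    k + 1 = Nat.card (Quotient (blockSetoid p.blocks ⊔ blockSetoid q.blocks)) +
      excess (joinPattern p q).blocks := by
  have hforest : (incidenceGraph (joinPattern p q).blocks).IsAcyclic :=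
    isAcyclic_incidenceGraph_of_pairwise_disjoint classesOn_pairwise_disjoint
  rwa [isAcyclic_incidenceGraph_iff, Nat.card_fin, blockSetoid_joinPattern hpq] at hforest

lemma joinTP_eq_some_iff {p q s : TWP k} :
    joinTP p q = some s ↔ Compat p q ∧ joinPattern p q = s := by
  classical
  have hjoin : joinPattern p q = (labels p).image fun ℓ ↦
      (labels p).filter fun ℓ' ↦ (glueTP p q).Reachable (.inl ℓ) (.inl ℓ') := by
    ext S
    simp only [joinPattern, classesOn, reachable_glueTP_inl_inl_iff, Finset.mem_image]
  simp only [joinTP, Compat, hjoin, Option.ite_none_right_eq_some, Option.some_inj]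

lemma compat_and_compat_joinPattern_iff {p q r : TWP k} :
    Compat p q ∧ Compat (joinPattern p q) r ↔
      labels p = labels q ∧ labels q = labels r ∧
        k + 1 = Nat.card (Quotient
            (blockSetoid p.blocks ⊔ blockSetoid q.blocks ⊔ blockSetoid r.blocks)) +
          (excess p.blocks + excess q.blocks + excess r.blocks) := by
  by_cases hpq : labels p = labels q
  · have hjoin := card_quotient_add_excess_joinPattern hpq
    have hle_pq := le_card_quotient_add_excess_add_excess p q
    have hle_join := le_card_quotient_add_excess_add_excess (joinPattern p q) r
    rw [blockSetoid_joinPattern hpq] at hle_join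
    simp only [Compat, isAcyclic_glueTP_iff, labels_joinPattern, blockSetoid_joinPattern hpq, hpq]
    lia
  · simp only [Compat, hpq, false_and]

lemma compat_and_compat_joinPattern_rotate {p q r : TWP k} :
    Compat p q ∧ Compat (joinPattern p q) r ↔ Compat q r ∧ Compat (joinPattern q r) p := by
  have hsup : blockSetoid p.blocks ⊔ blockSetoid q.blocks ⊔ blockSetoid r.blocks =
      blockSetoid q.blocks ⊔ blockSetoid r.blocks ⊔ blockSetoid p.blocks := by
    rw [sup_assoc, sup_comm]
  rw [compat_and_compat_joinPattern_iff, compat_and_compat_joinPattern_iff, hsup]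
  grind

end TWP

theorem join_compat_assoc_general {k : ℕ} (p q r : TWP k) :
    (∃ s, joinTP p q = some s ∧ Compat s r) ↔ (∃ s, joinTP q r = some s ∧ Compat p s) := by
  calc
    _ ↔ Compat p q ∧ Compat (p.joinPattern q) r := by simp [TWP.joinTP_eq_some_iff, and_assoc]
    _ ↔ Compat q r ∧ Compat (q.joinPattern r) p := TWP.compat_and_compat_joinPattern_rotate
    _ ↔ Compat q r ∧ Compat p (q.joinPattern r) := by rw [TWP.compat_comm (q := p)]
    _ ↔ _ := by simp [TWP.joinTP_eq_some_iff, and_assoc]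

/-- For treewidth patterns `p, q, r` with equal label sets:
`(p ⋈ q) ◁ r` iff `p ◁ (q ⋈ r)`, where no pattern is compatible with `⊥`. -/
theorem join_compat_assoc {k : ℕ} (p q r : TWP k)
    (hp : IsTWPat p) (hq : IsTWPat q) (hr : IsTWPat r)
    (hpq : labels p = labels q) (hqr : labels q = labels r) :
    (∃ s, joinTP p q = some s ∧ Compat s r) ↔ (∃ s, joinTP q r = some s ∧ Compat p s) :=
  join_compat_assoc_general p q r
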